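/- arXiv:2209.00317 — 3 statements merged into one kernel-verified Lean document; each statement's English description precedes it below -/
import Mathlib

section
/- Let G be a finite group containing commuting elements x and y whose orders are coprime, such that the cyclic subgroup ⟨x⟩ is not a normal subgroup of the centralizer C_G(y) and the cyclic subgroup ⟨y⟩ is not a normal subgroup of the centralizer C_G(x). Then the power graph of G is not chordal. -/
/-- The power graph of a group: distinct `x` and `y` are adjacent iff one is a power
of the other. -/
def powerGraph (G : Type*) [Group G] : SimpleGraph G :=
  SimpleGraph.fromRel (fun x y => x ∈ Subgroup.zpowers y)

/-- A graph is chordal if it has no induced cycle on at least 4 vertices. -/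
def IsChordal {V : Type*} (Γ : SimpleGraph V) : Prop :=
  ∀ n : ℕ, 4 ≤ n → IsEmpty (SimpleGraph.cycleGraph n ↪g Γ)

/-!
Let `Z = ⟨x, y⟩`, which is cyclic, and consider the poset of all images of `⟨x⟩`, `⟨y⟩` and `Z`
under automorphisms of `G`. By comparing orders, every strict inclusion in it is of an image of
`⟨x⟩` or `⟨y⟩` in an image of `Z`, so its comparability graph is bipartite; choosing generators
embeds this graph as an induced subgraph of the power graph. Every vertex has at least two
neighbours: `Z` contains both `⟨x⟩` and `⟨y⟩`, while conjugation by an element that centralizes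
`x` but does not normalize `⟨y⟩` moves `Z` to another subgroup containing `⟨x⟩`, and symmetrically
for `⟨y⟩`. A finite graph of minimum degree two has a cycle, and a shortest one is induced, of
length at least four by bipartiteness.
-/

open SimpleGraph Subgroup
open scoped Pointwise

section Graph

variable {V W : Type*} {Γ : SimpleGraph V} {Δ : SimpleGraph W}

theorem IsChordal.of_embedding (hΔ : IsChordal Δ) (f : Γ ↪g Δ) : IsChordal Γ :=
  fun n hn => ⟨fun c => (hΔ n hn).false (f.comp c)⟩

theorem girth_le_length_add_one_of_isPath {u v : V} {p : Γ.Walk u v} (hp : p.IsPath)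
    (hlen : 2 ≤ p.length) (hadj : Γ.Adj v u) : Γ.girth ≤ p.length + 1 := by
  have hcycle : (Walk.cons hadj p).IsCycle :=
    Walk.isCycle_iff_isPath_tail_and_le_length.2 ⟨by simpa using hp, by simpa using hlen⟩
  simpa using girth_le_length hcycle

theorem girth_le_of_adj_getVert {u : V} {w : Γ.Walk u u} (hw : w.IsCycle) {i j : ℕ}
    (hij : i + 2 ≤ j) (hj : j < w.length) (hadj : Γ.Adj (w.getVert i) (w.getVert j)) :
    Γ.girth ≤ j - i + 1 := by
  have hpath : ((w.take j).drop i).IsPath := (hw.isPath_take hj).drop i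
  have hlen : ((w.take j).drop i).length = j - i := by
    rw [Walk.drop_length, Walk.take_length, min_eq_left hj.le]
  rw [← hlen]
  refine girth_le_length_add_one_of_isPath hpath (by omega) ?_
  rw [Walk.take_getVert, min_eq_right (by omega)]
  exact hadj.symm

theorem adj_getVert_iff_of_length_eq_girth {u : V} {w : Γ.Walk u u} (hw : w.IsCycle)
    (hgirth : w.length = Γ.girth) {i j : ℕ} (hij : i < j) (hj : j < w.length) :
    Γ.Adj (w.getVert i) (w.getVert j) ↔ j = i + 1 ∨ i = 0 ∧ j + 1 = w.length := by
  constructor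
  · intro hadj
    by_contra! hchord
    have := girth_le_of_adj_getVert hw (by omega) hj hadj
    omega
  · rintro (rfl | ⟨rfl, hlast⟩)
    · exact w.adj_getVert_succ (by omega)
    · have := w.adj_getVert_succ hj
      rw [hlast, w.getVert_length] at this
      simpa using this.symm

theorem cycleGraph_adj_iff_of_lt {n : ℕ} {i j : Fin n} (hij : i < j) :
    (cycleGraph n).Adj i j ↔ j.val = i.val + 1 ∨ i.val = 0 ∧ j.val + 1 = n := by
  rw [cycleGraph_adj', Fin.coe_sub_iff_lt.2 hij, Fin.coe_sub_iff_le.2 hij.le]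
  omega

theorem nonempty_cycleGraph_girth_embedding (hΓ : ¬ Γ.IsAcyclic) :
    Nonempty (cycleGraph Γ.girth ↪g Γ) := by
  obtain ⟨u, w, hw, hgirth⟩ := exists_girth_eq_length.2 hΓ
  rw [hgirth]
  have hinj : Function.Injective fun i : Fin w.length => w.getVert i := fun i j h =>
    Fin.ext (hw.getVert_injOn' (Nat.le_sub_one_of_lt i.2) (Nat.le_sub_one_of_lt j.2) h)
  have hadj_of_lt (i j : Fin w.length) (hij : i < j) :
      Γ.Adj (w.getVert i) (w.getVert j) ↔ (cycleGraph w.length).Adj i j := by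
    rw [adj_getVert_iff_of_length_eq_girth hw hgirth.symm hij j.2, cycleGraph_adj_iff_of_lt hij]
  refine ⟨⟨⟨_, hinj⟩, fun {i j} => ?_⟩⟩
  rcases lt_trichotomy i j with hij | rfl | hij
  · exact hadj_of_lt i j hij
  · simp
  · rw [adj_comm, (cycleGraph _).adj_comm]
    exact hadj_of_lt j i hij

theorem IsChordal.isAcyclic_of_cliqueFree_three (hΓ : IsChordal Γ) (hfree : Γ.CliqueFree 3) :
    Γ.IsAcyclic := by
  by_contra hcyc
  obtain ⟨f⟩ := nonempty_cycleGraph_girth_embedding hcyc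
  rcases (three_le_girth hcyc).eq_or_lt with hthree | hfour
  · rw [← hthree, cycleGraph_three_eq_top] at f
    exact IsContained.not_cliqueFree ⟨f.toCopy⟩ hfree
  · exact (hΓ _ hfour).false f

theorem exists_neighborSet_subsingleton_of_isAcyclic [Finite V] [Nonempty V]
    (hΓ : Γ.IsAcyclic) : ∃ v, (Γ.neighborSet v).Subsingleton := by
  obtain ⟨u, v, p, hp, hmax⟩ := Walk.exists_isPath_forall_isPath_length_le_length Γ
  have hsupport {w : V} (hw : Γ.Adj u w) : w ∈ p.support := by
    by_contra hnot
    have := hmax _ _ _ (hp.cons (h := hw.symm) hnot)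
    simp at this
  exact ⟨u, fun a ha b hb => (hΓ.eq_snd_of_adj_start hp ha (hsupport ha)).trans
    (hΓ.eq_snd_of_adj_start hp hb (hsupport hb)).symm⟩

end Graph

section Comparability

/-- The comparability graph of a partial order, joining two elements when one is strictly below
the other. -/
def comparabilityGraph (α : Type*) [PartialOrder α] : SimpleGraph α where
  Adj a b := a < b ∨ b < a
  symm := ⟨fun _ _ => Or.symm⟩
  loopless := ⟨fun a h => by simp at h⟩

theorem comparabilityGraph_colorable_two {α : Type*} [PartialOrder α]
    (hchain : ∀ a b c : α, a < b → ¬ b < c) : (comparabilityGraph α).Colorable 2 := by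
  classical
  let C : (comparabilityGraph α).Coloring Bool := Coloring.mk (fun a => decide (∃ b, b < a)) <| by
    rintro a b (hab | hba)
    · simpa [show ∃ c, c < b from ⟨a, hab⟩] using fun c hca => hchain c a b hca hab
    · simpa [show ∃ c, c < a from ⟨b, hba⟩] using fun c hcb => hchain c b a hcb hba
  simpa using C.colorable

theorem nonempty_comparabilityGraph_embedding_powerGraph {G : Type*} [Group G]
    {S : Set (Subgroup G)} (hS : ∀ H ∈ S, IsCyclic H) :
    Nonempty (comparabilityGraph S ↪g powerGraph G) := by
  have hgen (H : S) : ∃ a, zpowers a = H.1 :=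
    (Subgroup.isCyclic_iff_exists_zpowers_eq_top H.1).1 (hS H.1 H.2)
  choose gen hgen using hgen
  have hinj : Function.Injective gen := fun H K h => Subtype.ext (by rw [← hgen, h, hgen])
  have hmem (H K : S) : gen H ∈ zpowers (gen K) ↔ H ≤ K := by
    rw [← zpowers_le, hgen, hgen, Subtype.coe_le_coe]
  refine ⟨⟨⟨gen, hinj⟩, fun {H K} => ?_⟩⟩
  simp only [powerGraph, fromRel_adj, Function.Embedding.coeFn_mk, hmem, hinj.ne_iff,
    comparabilityGraph, lt_iff_le_and_ne]
  tauto

end Comparability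

section Group

variable {G : Type*} [Group G]

theorem mem_zpowers_mul_of_coprime {x y : G} (hcomm : Commute x y)
    (hcop : (orderOf x).Coprime (orderOf y)) : x ∈ zpowers (x * y) := by
  obtain ⟨m, hm⟩ := exists_pow_eq_self_of_coprime (x := x) hcop.symm
  have hpow : (x * y) ^ orderOf y = x ^ orderOf y := by
    rw [hcomm.mul_pow, pow_orderOf_eq_one, mul_one]
  have hmem : ((x * y) ^ orderOf y) ^ m ∈ zpowers (x * y) := pow_mem (npow_mem_zpowers _ _) m
  rwa [hpow, hm] at hmem

theorem zpowers_sup_zpowers_of_coprime {x y : G} (hcomm : Commute x y)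
    (hcop : (orderOf x).Coprime (orderOf y)) : zpowers x ⊔ zpowers y = zpowers (x * y) := by
  refine le_antisymm (sup_le ?_ ?_) ?_ <;> rw [zpowers_le]
  · exact mem_zpowers_mul_of_coprime hcomm hcop
  · rw [hcomm.eq]
    exact mem_zpowers_mul_of_coprime hcomm.symm hcop.symm
  · exact mul_mem_sup (mem_zpowers x) (mem_zpowers y)

theorem mem_iff_pow_natCard_eq_one [Finite G] [IsCyclic G] (H : Subgroup G) {a : G} :
    a ∈ H ↔ a ^ Nat.card H = 1 := by
  classical
  have := Fintype.ofFinite G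
  have hsub : (H : Set G).toFinset ⊆ ({b | b ^ Nat.card H = 1} : Finset G) := fun b hb => by
    simpa [← orderOf_dvd_iff_pow_eq_one] using H.orderOf_dvd_natCard (by simpa using hb)
  have heq := Finset.eq_of_subset_of_card_le hsub <| by
    rw [Set.toFinset_card, ← Nat.card_eq_fintype_card]
    exact IsCyclic.card_pow_eq_one_le Nat.card_pos
  simpa using Finset.ext_iff.1 heq a

theorem eq_of_natCard_eq_of_isCyclic [Finite G] [IsCyclic G] {H K : Subgroup G}
    (hcard : Nat.card H = Nat.card K) : H = K := by
  ext a
  rw [mem_iff_pow_natCard_eq_one, hcard, mem_iff_pow_natCard_eq_one]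

theorem eq_of_le_of_natCard_eq_of_isCyclic {H K C : Subgroup G} [Finite C] [IsCyclic C]
    (hH : H ≤ C) (hK : K ≤ C) (hcard : Nat.card H = Nat.card K) : H = K := by
  have hsub : H.subgroupOf C = K.subgroupOf C := eq_of_natCard_eq_of_isCyclic <| by
    rw [Nat.card_congr (subgroupOfEquivOfLe hH).toEquiv, hcard,
      Nat.card_congr (subgroupOfEquivOfLe hK).toEquiv]
  rwa [subgroupOf_inj, inf_of_le_left hH, inf_of_le_left hK] at hsub

theorem natCard_lt_natCard_of_lt {H K : Subgroup G} [Finite K] (h : H < K) :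
    Nat.card H < Nat.card K :=
  lt_of_not_ge fun hcard => h.ne (eq_of_le_of_card_ge h.le hcard)

variable {A : Type*} [Group A] [MulDistribMulAction A G]

theorem natCard_smul (φ : A) (H : Subgroup G) : Nat.card ↥(φ • H) = Nat.card H :=
  Nat.card_congr (equivSMul φ H).toEquiv.symm

theorem smul_lt_smul_iff {H K : Subgroup G} (φ : A) : φ • H < φ • K ↔ H < K := by
  simp only [lt_iff_le_not_ge, pointwise_smul_le_pointwise_smul_iff]

theorem smul_sup_ne_of_smul_ne {X Y : Subgroup G} [Finite ↥(X ⊔ Y)] [IsCyclic ↥(X ⊔ Y)] {φ : A}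
    (hX : φ • X ≠ X) : φ • (X ⊔ Y) ≠ X ⊔ Y := by
  intro hfix
  have hle : φ • X ≤ X ⊔ Y := by
    rw [← hfix, pointwise_smul_le_pointwise_smul_iff]
    exact le_sup_left
  exact hX (eq_of_le_of_natCard_eq_of_isCyclic hle le_sup_left (natCard_smul φ X))

theorem natCard_ne_one_of_smul_ne {X : Subgroup G} {φ : A} (hX : φ • X ≠ X) : Nat.card X ≠ 1 := by
  intro hcard
  rw [card_eq_one] at hcard
  exact hX (by rw [hcard, smul_bot])

theorem lt_sup_left_of_coprime_natCard {X Y : Subgroup G}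
    (hcop : (Nat.card X).Coprime (Nat.card Y)) (hY : Nat.card Y ≠ 1) : X < X ⊔ Y :=
  left_lt_sup.2 fun hle => hY (Nat.Coprime.eq_one_of_dvd hcop.symm (card_dvd_of_le hle))

end Group

section AutOrbits

variable {G : Type*} [Group G] {X Y : Subgroup G}

/-- The subgroups that are images of `X`, `Y` or `X ⊔ Y` under an automorphism of `G`; their
comparability graph carries the induced cycle in the power graph. -/
def autOrbits (X Y : Subgroup G) : Set (Subgroup G) :=
  MulAction.orbit (MulAut G) X ∪ MulAction.orbit (MulAut G) Y ∪ MulAction.orbit (MulAut G) (X ⊔ Y)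

theorem smul_left_mem_autOrbits (φ : MulAut G) (X Y : Subgroup G) : φ • X ∈ autOrbits X Y :=
  Or.inl (Or.inl ⟨φ, rfl⟩)

theorem smul_right_mem_autOrbits (φ : MulAut G) (X Y : Subgroup G) : φ • Y ∈ autOrbits X Y :=
  Or.inl (Or.inr ⟨φ, rfl⟩)

theorem smul_sup_mem_autOrbits (φ : MulAut G) (X Y : Subgroup G) :
    φ • (X ⊔ Y) ∈ autOrbits X Y :=
  Or.inr ⟨φ, rfl⟩

theorem isCyclic_of_mem_autOrbits [IsCyclic ↥(X ⊔ Y)] {H : Subgroup G} (hH : H ∈ autOrbits X Y) :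
    IsCyclic H := by
  have hXcyc : IsCyclic X := isCyclic_of_le (le_sup_left (b := Y))
  have hYcyc : IsCyclic Y := isCyclic_of_le (le_sup_right (a := X))
  rcases hH with (⟨φ, rfl⟩ | ⟨φ, rfl⟩) | ⟨φ, rfl⟩ <;>
    exact (equivSMul φ _).isCyclic.1 inferInstance

theorem natCard_mem_of_mem_autOrbits {H : Subgroup G} (hH : H ∈ autOrbits X Y) :
    Nat.card H = Nat.card X ∨ Nat.card H = Nat.card Y ∨ Nat.card H = Nat.card ↥(X ⊔ Y) := by
  rcases hH with (⟨φ, rfl⟩ | ⟨φ, rfl⟩) | ⟨φ, rfl⟩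
  · exact Or.inl (natCard_smul φ X)
  · exact Or.inr (Or.inl (natCard_smul φ Y))
  · exact Or.inr (Or.inr (natCard_smul φ (X ⊔ Y)))

theorem natCard_eq_natCard_sup_of_lt [Finite G] (hcop : (Nat.card X).Coprime (Nat.card Y))
    (hX : Nat.card X ≠ 1) (hY : Nat.card Y ≠ 1) {H K : Subgroup G} (hH : H ∈ autOrbits X Y)
    (hK : K ∈ autOrbits X Y) (hHK : H < K) : Nat.card K = Nat.card ↥(X ⊔ Y) := by
  have hlt : Nat.card H < Nat.card K := natCard_lt_natCard_of_lt hHK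
  have hdvd : Nat.card H ∣ Nat.card K := card_dvd_of_le hHK.le
  have hXsup : Nat.card X ≤ Nat.card ↥(X ⊔ Y) := card_le_of_le le_sup_left
  have hYsup : Nat.card Y ≤ Nat.card ↥(X ⊔ Y) := card_le_of_le le_sup_right
  have hXY : ¬ Nat.card X ∣ Nat.card Y := fun h => hX (hcop.eq_one_of_dvd h)
  have hYX : ¬ Nat.card Y ∣ Nat.card X := fun h => hY (hcop.symm.eq_one_of_dvd h)
  rcases natCard_mem_of_mem_autOrbits hH with h | h | h <;>
    rcases natCard_mem_of_mem_autOrbits hK with k | k | k <;> rw [h, k] at hlt hdvd <;>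
    first | exact k | omega

theorem cliqueFree_three_comparabilityGraph_autOrbits [Finite G]
    (hcop : (Nat.card X).Coprime (Nat.card Y)) (hX : Nat.card X ≠ 1) (hY : Nat.card Y ≠ 1) :
    (comparabilityGraph (autOrbits X Y)).CliqueFree 3 := by
  refine (comparabilityGraph_colorable_two fun H K L hHK hKL => ?_).cliqueFree (by norm_num)
  have hK := natCard_eq_natCard_sup_of_lt hcop hX hY H.2 K.2 hHK
  have hL := natCard_eq_natCard_sup_of_lt hcop hX hY K.2 L.2 hKL
  exact (natCard_lt_natCard_of_lt hKL).ne (hK.trans hL.symm)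

theorem neighborSet_nontrivial_of_lt_of_smul_eq {S : Set (Subgroup G)} {H Z : Subgroup G}
    (hHZ : H < Z) {ψ : MulAut G} (hH : ψ • H = H) (hZ : ψ • Z ≠ Z) (hS : ∀ φ : MulAut G, φ • Z ∈ S)
    {φ : MulAut G} (hφ : φ • H ∈ S) :
    ((comparabilityGraph S).neighborSet ⟨φ • H, hφ⟩).Nontrivial := by
  have hlt : φ • H < (φ * ψ) • Z := by
    rw [← hH, ← mul_smul, smul_lt_smul_iff]
    exact hHZ
  refine ⟨⟨φ • Z, hS φ⟩, Or.inl ((smul_lt_smul_iff φ).2 hHZ), ⟨(φ * ψ) • Z, hS _⟩, Or.inl hlt, ?_⟩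
  rw [ne_eq, Subtype.mk.injEq, mul_smul, smul_left_cancel_iff]
  exact hZ.symm

theorem neighborSet_autOrbits_nontrivial [Finite G] [IsCyclic ↥(X ⊔ Y)]
    (hcop : (Nat.card X).Coprime (Nat.card Y)) {φ ψ : MulAut G} (hφY : φ • Y = Y)
    (hφX : φ • X ≠ X) (hψX : ψ • X = X) (hψY : ψ • Y ≠ Y) (H : autOrbits X Y) :
    ((comparabilityGraph (autOrbits X Y)).neighborSet H).Nontrivial := by
  have hXcard := natCard_ne_one_of_smul_ne hφX
  have hYcard := natCard_ne_one_of_smul_ne hψY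
  have hXlt : X < X ⊔ Y := lt_sup_left_of_coprime_natCard hcop hYcard
  have hYlt : Y < X ⊔ Y := sup_comm Y X ▸ lt_sup_left_of_coprime_natCard hcop.symm hXcard
  have hφsup : φ • (X ⊔ Y) ≠ X ⊔ Y := smul_sup_ne_of_smul_ne hφX
  have hψsup : ψ • (X ⊔ Y) ≠ X ⊔ Y := by
    have : IsCyclic ↥(Y ⊔ X) := sup_comm X Y ▸ ‹_›
    exact sup_comm Y X ▸ smul_sup_ne_of_smul_ne hψY
  have hsup := fun χ => smul_sup_mem_autOrbits χ X Y
  obtain ⟨_, (⟨χ, rfl⟩ | ⟨χ, rfl⟩) | ⟨χ, rfl⟩⟩ := H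
  · exact neighborSet_nontrivial_of_lt_of_smul_eq hXlt hψX hψsup hsup _
  · exact neighborSet_nontrivial_of_lt_of_smul_eq hYlt hφY hφsup hsup _
  · refine ⟨⟨χ • X, smul_left_mem_autOrbits χ X Y⟩, Or.inr ((smul_lt_smul_iff χ).2 hXlt),
      ⟨χ • Y, smul_right_mem_autOrbits χ X Y⟩, Or.inr ((smul_lt_smul_iff χ).2 hYlt), ?_⟩
    rw [ne_eq, Subtype.mk.injEq, smul_left_cancel_iff]
    exact fun hXY => hφX (hXY ▸ hφY)

end AutOrbits

theorem exists_mulAut_smul_zpowers_eq_and_ne {G : Type*} [Group G] {x y : G}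
    (hx : ¬ ∀ g ∈ centralizer {y}, ∀ a ∈ zpowers x, g * a * g⁻¹ ∈ zpowers x) :
    ∃ φ : MulAut G, φ • zpowers y = zpowers y ∧ φ • zpowers x ≠ zpowers x := by
  push Not at hx
  obtain ⟨g, hg, a, ha, hnot⟩ := hx
  have hgy : MulAut.conj g y = y := by
    rw [MulAut.conj_apply, mem_centralizer_singleton_iff.1 hg, mul_inv_cancel_right]
  refine ⟨MulAut.conj g, ?_, fun hfix => hnot ?_⟩
  · rw [zpowers_eq_closure, smul_closure, Set.smul_set_singleton, MulAut.smul_def, hgy]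
  · exact hfix ▸ smul_mem_pointwise_smul a (MulAut.conj g) _ ha

theorem stmt12_general {G : Type*} [Group G] [Finite G] {x y : G} (hcomm : Commute x y)
    (hcop : (orderOf x).Coprime (orderOf y))
    (hx : ∃ φ : MulAut G, φ • zpowers y = zpowers y ∧ φ • zpowers x ≠ zpowers x)
    (hy : ∃ ψ : MulAut G, ψ • zpowers x = zpowers x ∧ ψ • zpowers y ≠ zpowers y) :
    ¬ IsChordal (powerGraph G) := by
  intro hchordal
  obtain ⟨φ, hφy, hφx⟩ := hx
  obtain ⟨ψ, hψx, hψy⟩ := hy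
  have hcard : (Nat.card (zpowers x)).Coprime (Nat.card (zpowers y)) := by
    rwa [Nat.card_zpowers, Nat.card_zpowers]
  have hcyc : IsCyclic ↥(zpowers x ⊔ zpowers y) :=
    zpowers_sup_zpowers_of_coprime hcomm hcop ▸ isCyclic_zpowers (x * y)
  let S := autOrbits (zpowers x) (zpowers y)
  have : Nonempty S := ⟨⟨_, smul_left_mem_autOrbits 1 (zpowers x) (zpowers y)⟩⟩
  obtain ⟨f⟩ := nonempty_comparabilityGraph_embedding_powerGraph
    (S := S) fun _ => isCyclic_of_mem_autOrbits
  have hacyclic : (comparabilityGraph S).IsAcyclic :=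
    (hchordal.of_embedding f).isAcyclic_of_cliqueFree_three <|
      cliqueFree_three_comparabilityGraph_autOrbits hcard
        (natCard_ne_one_of_smul_ne hφx) (natCard_ne_one_of_smul_ne hψy)
  obtain ⟨H, hH⟩ := exists_neighborSet_subsingleton_of_isAcyclic hacyclic
  exact Set.not_subsingleton_iff.2
    (neighborSet_autOrbits_nontrivial hcard hφy hφx hψx hψy H) hH

theorem stmt12 (G : Type*) [Group G] [Fintype G] (x y : G)
    (hcomm : x * y = y * x) (hcop : Nat.Coprime (orderOf x) (orderOf y))
    (hx : ¬ ∀ g ∈ Subgroup.centralizer {y}, ∀ a ∈ Subgroup.zpowers x,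
      g * a * g⁻¹ ∈ Subgroup.zpowers x)
    (hy : ¬ ∀ g ∈ Subgroup.centralizer {x}, ∀ a ∈ Subgroup.zpowers y,
      g * a * g⁻¹ ∈ Subgroup.zpowers y) :
    ¬ IsChordal (powerGraph G) :=
  stmt12_general hcomm hcop (exists_mulAut_smul_zpowers_eq_and_ne hx)
    (exists_mulAut_smul_zpowers_eq_and_ne hy)
end

section
/- Let G be a finite group containing no element whose order is divisible by pqr for pairwise distinct primes p, q, r, and no element whose order is divisible by p²q² for distinct primes p, q. Then the power graph of G contains an induced 4-cycle (four pairwise distinct elements a, b, c, d such that a–b, b–c, c–d, d–a are edges of the power graph while a–c and b–d are not) if and only if there exist elements g, h ∈ G, a prime q, and m > 1 such that: the orders of g and h both equal q^m; g^q = h^q but ⟨g⟩ ≠ ⟨h⟩; and there is a prime p ≠ q dividing the order of the centralizer in G of the set {g, h}. -/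
/-- Four pairwise distinct vertices forming an induced 4-cycle in the power graph. -/
def IsInducedFourCycle {G : Type*} [Group G] (a b c d : G) : Prop :=
  a ≠ b ∧ a ≠ c ∧ a ≠ d ∧ b ≠ c ∧ b ≠ d ∧ c ≠ d ∧
    (powerGraph G).Adj a b ∧ (powerGraph G).Adj b c ∧ (powerGraph G).Adj c d ∧
    (powerGraph G).Adj d a ∧ ¬ (powerGraph G).Adj a c ∧ ¬ (powerGraph G).Adj b d

/-!
The cyclic subgroups `⟨a⟩`, `⟨c⟩` of an induced 4-cycle are incomparable and both contain the
incomparable subgroups `⟨b⟩` and `⟨d⟩` (up to rotating the cycle). Hence two primes `p ≠ q` and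
elements `z` of order `p` and `w` of order `q` live in `⟨a⟩ ∩ ⟨c⟩`, and the hypothesis on `pqr`
forces `⟨a⟩ = ⟨x⟩ ⊔ ⟨y⟩` and `⟨c⟩ = ⟨x'⟩ ⊔ ⟨y'⟩` with `x`, `x'` of `p`-power and `y`, `y'` of
`q`-power order.

If `⟨y⟩`, `⟨y'⟩` are incomparable, descend in `⟨y⟩` to the last power outside `⟨y'⟩`: its `q`-th
power is also a `q`-th power in `⟨y'⟩`, which gives the desired pair, centralized by `z`. The same
works for `x`, `x'` and `w`. Otherwise the inclusions are crossed, say `⟨x⟩ < ⟨x'⟩` and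
`⟨y'⟩ < ⟨y⟩`. If `x'` does not normalize `⟨y⟩`, then `y` and its conjugate by `x'` are incomparable
and we are in the previous case, and likewise with the roles exchanged; if each normalizes the
other's cyclic group, then `x'` and `y` commute and `x' * y` has order divisible by `p²q²`.

Conversely, `g * z`, `g ^ q`, `h * z`, `z` is an induced 4-cycle when `z` is an element of order `p`
centralizing `g` and `h`.
-/

open Subgroup

/-- Four elements whose cyclic subgroups form a crown in the subgroup lattice: `⟨b⟩` and `⟨d⟩` are
incomparable and lie in both of the incomparable subgroups `⟨a⟩` and `⟨c⟩`. This is an induced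
4-cycle of the power graph with the directions of its edges fixed. -/
structure IsPowerCrown {G : Type*} [Group G] (a b c d : G) : Prop where
  b_le_a : zpowers b ≤ zpowers a
  b_le_c : zpowers b ≤ zpowers c
  d_le_a : zpowers d ≤ zpowers a
  d_le_c : zpowers d ≤ zpowers c
  not_a_le_c : ¬ zpowers a ≤ zpowers c
  not_c_le_a : ¬ zpowers c ≤ zpowers a
  not_b_le_d : ¬ zpowers b ≤ zpowers d
  not_d_le_b : ¬ zpowers d ≤ zpowers b

/-- The obstruction to the absence of induced 4-cycles: two different cyclic `q`-subgroups of equal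
order with generators `g`, `h` sharing a nontrivial `q`-th power, both centralized by an element of
prime order other than `q`. Asking for such an element, rather than for a prime divisor of the order
of the centralizer, keeps the notion meaningful in infinite groups. -/
def HasCentralizedFork (G : Type*) [Group G] : Prop :=
  ∃ (g h : G) (q m : ℕ), q.Prime ∧ 1 < m ∧ orderOf g = q ^ m ∧ orderOf h = q ^ m ∧
    g ^ q = h ^ q ∧ zpowers g ≠ zpowers h ∧
    ∃ z ∈ centralizer {g, h}, (orderOf z).Prime ∧ orderOf z ≠ q

/-- A generating pair of the cyclic group `⟨a⟩` adapted to two of its elements `z`, `w`, in practice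
of distinct prime orders `p`, `q`: `x` has `p`-power order with `z ∈ ⟨x⟩` and `y` has `q`-power
order with `w ∈ ⟨y⟩`. -/
structure IsPrimarySplitting {G : Type*} [Group G] (z w a x y : G) : Prop where
  zpowers_eq : zpowers a = zpowers x ⊔ zpowers y
  orderOf_left : ∃ i : ℕ, orderOf x = orderOf z ^ i
  orderOf_right : ∃ j : ℕ, orderOf y = orderOf w ^ j
  le_left : zpowers z ≤ zpowers x
  le_right : zpowers w ≤ zpowers y

section Arithmetic

theorem exists_prime_ne_dvd_of_not_dvd {m n : ℕ} (hmn : ¬ m ∣ n) (hnm : ¬ n ∣ m) :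
    ∃ p q : ℕ, p.Prime ∧ q.Prime ∧ p ≠ q ∧ p ∣ m ∧ q ∣ n := by
  rw [Nat.dvd_iff_prime_pow_dvd_dvd] at hmn hnm
  push Not at hmn hnm
  obtain ⟨p, k, hp, hpm, hpn⟩ := hmn
  obtain ⟨q, l, hq, hqn, hqm⟩ := hnm
  have hk : k ≠ 0 := by rintro rfl; simp at hpn
  have hl : l ≠ 0 := by rintro rfl; simp at hqm
  refine ⟨p, q, hp, hq, ?_, (dvd_pow_self p hk).trans hpm, (dvd_pow_self q hl).trans hqn⟩
  rintro rfl
  rcases le_total k l with hkl | hlk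
  · exact hpn ((pow_dvd_pow p hkl).trans hqn)
  · exact hqm ((pow_dvd_pow p hlk).trans hpm)

theorem primeFactors_eq_pair {n p q : ℕ} (hn : n ≠ 0) (hp : p.Prime) (hq : q.Prime) (hpq : p ≠ q)
    (hpn : p ∣ n) (hqn : q ∣ n)
    (hthird : ∀ r : ℕ, r.Prime → p ≠ r → q ≠ r → ¬ p * q * r ∣ n) :
    n.primeFactors = {p, q} := by
  ext r
  simp only [Nat.mem_primeFactors, Finset.mem_insert, Finset.mem_singleton]
  refine ⟨fun ⟨hr, hrn, _⟩ ↦ ?_, ?_⟩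
  · by_contra! hne
    have hpr := (Nat.coprime_primes hp hr).2 hne.1.symm
    have hqr := (Nat.coprime_primes hq hr).2 hne.2.symm
    have hpqn := ((Nat.coprime_primes hp hq).2 hpq).mul_dvd_of_dvd_of_dvd hpn hqn
    exact hthird r hr hne.1.symm hne.2.symm ((hpr.mul_left hqr).mul_dvd_of_dvd_of_dvd hpqn hrn)
  · rintro (rfl | rfl)
    exacts [⟨hp, hpn, hn⟩, ⟨hq, hqn, hn⟩]

theorem eq_pow_mul_pow_of_primeFactors_eq_pair {n p q : ℕ} (hn : n ≠ 0) (hpq : p ≠ q)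
    (h : n.primeFactors = {p, q}) : n = p ^ n.factorization p * q ^ n.factorization q := by
  conv_lhs => rw [← Nat.prod_factorization_pow_eq_self hn]
  rw [Finsupp.prod, Nat.support_factorization, h, Finset.prod_pair hpq]

end Arithmetic

section CyclicSubgroups

variable {G : Type*} [Group G] {a x y z : G} {m n p i : ℕ}

theorem orderOf_dvd_of_zpowers_le (h : zpowers x ≤ zpowers y) : orderOf x ∣ orderOf y :=
  orderOf_dvd_of_mem_zpowers (zpowers_le.1 h)

theorem commute_of_zpowers_le (hx : zpowers x ≤ zpowers a) (hy : zpowers y ≤ zpowers a) :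
    Commute x y := by
  obtain ⟨k, rfl⟩ := mem_zpowers_iff.1 (zpowers_le.1 hx)
  obtain ⟨l, rfl⟩ := mem_zpowers_iff.1 (zpowers_le.1 hy)
  exact Commute.zpow_zpow_self a k l

theorem zpowers_pow_gcd_orderOf (a : G) (n : ℕ) :
    zpowers (a ^ (orderOf a).gcd n) = zpowers (a ^ n) := by
  apply le_antisymm <;> rw [zpowers_le]
  · refine ⟨(orderOf a).gcdB n, ?_⟩
    rw [← zpow_natCast a ((orderOf a).gcd n), Nat.gcd_eq_gcd_ab, zpow_add, zpow_mul, zpow_mul,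
      zpow_natCast, zpow_natCast, pow_orderOf_eq_one, one_zpow, one_mul]
  · obtain ⟨k, hk⟩ := Nat.gcd_dvd_right (orderOf a) n
    have hpow : a ^ n = (a ^ (orderOf a).gcd n) ^ k := by rw [← pow_mul, ← hk]
    exact hpow ▸ npow_mem_zpowers _ k

theorem zpowers_le_of_orderOf_dvd (ha : IsOfFinOrder a) (hx : zpowers x ≤ zpowers a)
    (hy : zpowers y ≤ zpowers a) (hxy : orderOf x ∣ orderOf y) : zpowers x ≤ zpowers y := by
  obtain ⟨l, rfl⟩ := ha.mem_powers_iff_mem_zpowers.2 (zpowers_le.1 hx)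
  obtain ⟨k, rfl⟩ := ha.mem_powers_iff_mem_zpowers.2 (zpowers_le.1 hy)
  have hgcd : (orderOf a).gcd k ∣ l := by
    have hdvd : orderOf a ∣ l * orderOf (a ^ k) := by
      rw [orderOf_dvd_iff_pow_eq_one, pow_mul]
      exact orderOf_dvd_iff_pow_eq_one.1 hxy
    have hpos : 0 < orderOf (a ^ k) := ha.pow.orderOf_pos
    have hmul : (orderOf a).gcd k * orderOf (a ^ k) = orderOf a := by
      rw [ha.orderOf_pow, Nat.mul_div_cancel' (Nat.gcd_dvd_left _ _)]
    rw [← hmul] at hdvd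
    exact Nat.dvd_of_mul_dvd_mul_right hpos hdvd
  obtain ⟨c, rfl⟩ := hgcd
  simp only [pow_mul]
  rw [← zpowers_pow_gcd_orderOf a k, zpowers_le]
  exact npow_mem_zpowers _ c

theorem zpowers_eq_of_orderOf_eq (ha : IsOfFinOrder a) (hx : zpowers x ≤ zpowers a)
    (hy : zpowers y ≤ zpowers a) (hxy : orderOf x = orderOf y) : zpowers x = zpowers y :=
  le_antisymm (zpowers_le_of_orderOf_dvd ha hx hy hxy.dvd)
    (zpowers_le_of_orderOf_dvd ha hy hx hxy.symm.dvd)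

theorem zpowers_pow_of_coprime (h : n.Coprime (orderOf x)) : zpowers (x ^ n) = zpowers x := by
  rw [← zpowers_pow_gcd_orderOf, h.symm.gcd_eq_one, pow_one]

theorem zpowers_eq_sup_of_coprime (h : m.Coprime n) (a : G) :
    zpowers a = zpowers (a ^ m) ⊔ zpowers (a ^ n) := by
  refine le_antisymm ?_ (sup_le ?_ ?_) <;> rw [zpowers_le]
  · obtain ⟨s, t, hst⟩ := Nat.isCoprime_iff_coprime.2 h
    have hbezout : (a ^ m) ^ s * (a ^ n) ^ t = a := by
      rw [← zpow_natCast, ← zpow_natCast, ← zpow_mul', ← zpow_mul', ← zpow_add, hst, zpow_one]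
    have hmem := mul_mem_sup (zpow_mem_zpowers (a ^ m) s) (zpow_mem_zpowers (a ^ n) t)
    rwa [hbezout] at hmem
  · exact npow_mem_zpowers a m
  · exact npow_mem_zpowers a n

theorem zpowers_mul_eq_sup (hxy : Commute x y) (h : (orderOf x).Coprime (orderOf y)) :
    zpowers (x * y) = zpowers x ⊔ zpowers y := by
  rw [zpowers_eq_sup_of_coprime h.symm, hxy.mul_pow, hxy.mul_pow, pow_orderOf_eq_one,
    pow_orderOf_eq_one, mul_one, one_mul, zpowers_pow_of_coprime h.symm, zpowers_pow_of_coprime h]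

theorem not_zpowers_le_of_coprime (h : (orderOf x).Coprime (orderOf y)) (hx : x ≠ 1) :
    ¬ zpowers x ≤ zpowers y := fun hle ↦
  hx (orderOf_eq_one_iff.1 (Nat.eq_one_of_dvd_coprimes h dvd_rfl (orderOf_dvd_of_zpowers_le hle)))

theorem exists_zpowers_le_orderOf_eq (ha : IsOfFinOrder a) (hn : n ∣ orderOf a) :
    ∃ z, zpowers z ≤ zpowers a ∧ orderOf z = n :=
  ⟨a ^ (orderOf a / n), zpowers_le.2 (npow_mem_zpowers _ _),
    orderOf_pow_orderOf_div ha.orderOf_pos.ne' hn⟩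

theorem exists_orderOf_eq_zpowers_eq_sup (ha : IsOfFinOrder a) (hmn : m.Coprime n)
    (h : orderOf a = m * n) :
    ∃ x y, orderOf x = m ∧ orderOf y = n ∧ zpowers a = zpowers x ⊔ zpowers y := by
  have hmn0 : m * n ≠ 0 := h ▸ ha.orderOf_pos.ne'
  obtain ⟨hm, hn⟩ := mul_ne_zero_iff.1 hmn0
  refine ⟨a ^ n, a ^ m, ?_, ?_, zpowers_eq_sup_of_coprime hmn.symm a⟩
  · rw [orderOf_pow_of_dvd hn (h ▸ dvd_mul_left n m), h, Nat.mul_div_cancel _ hn.bot_lt]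
  · rw [orderOf_pow_of_dvd hm (h ▸ dvd_mul_right m n), h, Nat.mul_div_cancel_left _ hm.bot_lt]

theorem orderOf_eq_mul_orderOf_pow (hn : n ≠ 0) (h : n ∣ orderOf x) :
    orderOf x = n * orderOf (x ^ n) := by
  rw [orderOf_pow_of_dvd hn h, Nat.mul_div_cancel' h]

theorem one_lt_of_pow_ne_one (hx : orderOf x = p ^ i) (hxp : x ^ p ≠ 1) : 1 < i := by
  by_contra! hi
  refine hxp (orderOf_dvd_iff_pow_eq_one.1 ?_)
  simpa only [hx, pow_one] using pow_dvd_pow p hi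

theorem sq_dvd_orderOf_of_not_zpowers_le (hp : p.Prime) (hx : orderOf x = p ^ i)
    (hz : orderOf z = p) (hzx : zpowers z ≤ zpowers x) (hxz : ¬ zpowers x ≤ zpowers z) :
    p ^ 2 ∣ orderOf x := by
  have hfin : IsOfFinOrder x := orderOf_pos_iff.1 (hx ▸ pow_pos hp.pos i)
  have hxp : x ^ p ≠ 1 := fun h ↦
    hxz (zpowers_le_of_orderOf_dvd hfin le_rfl hzx (hz ▸ orderOf_dvd_of_pow_eq_one h))
  exact hx ▸ pow_dvd_pow p (one_lt_of_pow_ne_one hx hxp)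

theorem disjoint_zpowers_of_coprime (h : (orderOf x).Coprime (orderOf y)) :
    Disjoint (zpowers x) (zpowers y) :=
  disjoint_of_coprime_natCard (by rwa [Nat.card_zpowers, Nat.card_zpowers])

theorem commute_of_conj_mem_of_disjoint {H K : Subgroup G} (hHK : Disjoint H K) (hx : x ∈ H)
    (hy : y ∈ K) (hxy : x * y * x⁻¹ ∈ K) (hyx : y * x * y⁻¹ ∈ H) : Commute x y := by
  rw [← commutatorElement_eq_one_iff_commute]
  refine disjoint_def.1 hHK ?_ (K.mul_mem hxy (K.inv_mem hy))
  have hmem := H.mul_mem hx (H.inv_mem hyx)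
  rwa [mul_inv_rev, mul_inv_rev, inv_inv, ← mul_assoc, ← mul_assoc] at hmem

theorem mem_centralizer_pair_iff : z ∈ centralizer {x, y} ↔ Commute z x ∧ Commute z y := by
  simp only [mem_centralizer_iff, Set.mem_insert_iff, Set.mem_singleton_iff, forall_eq_or_imp,
    forall_eq, Commute.symm_iff (a := z), commute_iff_eq]

theorem exists_prime_ne_dvd_natCard_iff (H : Subgroup G) [Finite H] (q : ℕ) :
    (∃ p : ℕ, p.Prime ∧ p ≠ q ∧ p ∣ Nat.card H) ↔
      ∃ z ∈ H, (orderOf z).Prime ∧ orderOf z ≠ q := by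
  constructor
  · rintro ⟨p, hp, hpq, hdvd⟩
    have : Fact p.Prime := ⟨hp⟩
    obtain ⟨z, rfl⟩ := exists_prime_orderOf_dvd_card' p hdvd
    exact ⟨z, z.2, by rwa [orderOf_coe], by rwa [orderOf_coe]⟩
  · rintro ⟨z, hz, hprime, hne⟩
    exact ⟨orderOf z, hprime, hne, H.orderOf_dvd_natCard hz⟩

end CyclicSubgroups

section Crowns

variable {G : Type*} [Group G] {a b c d : G}

theorem powerGraph_adj_iff :
    (powerGraph G).Adj a b ↔ a ≠ b ∧ (zpowers a ≤ zpowers b ∨ zpowers b ≤ zpowers a) := by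
  simp only [powerGraph, SimpleGraph.fromRel_adj, zpowers_le]

theorem IsPowerCrown.isInducedFourCycle (h : IsPowerCrown a b c d) :
    IsInducedFourCycle a b c d := by
  have hab : a ≠ b := by rintro rfl; exact h.not_a_le_c h.b_le_c
  have hac : a ≠ c := by rintro rfl; exact h.not_a_le_c le_rfl
  have had : a ≠ d := by rintro rfl; exact h.not_a_le_c h.d_le_c
  have hbc : b ≠ c := by rintro rfl; exact h.not_c_le_a h.b_le_a
  have hbd : b ≠ d := by rintro rfl; exact h.not_b_le_d le_rfl
  have hcd : c ≠ d := by rintro rfl; exact h.not_c_le_a h.d_le_a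
  simp only [IsInducedFourCycle, powerGraph_adj_iff]
  exact ⟨hab, hac, had, hbc, hbd, hcd, ⟨hab, .inr h.b_le_a⟩, ⟨hbc, .inl h.b_le_c⟩,
    ⟨hcd, .inr h.d_le_c⟩, ⟨had.symm, .inl h.d_le_a⟩,
    fun hadj ↦ hadj.2.elim h.not_a_le_c h.not_c_le_a,
    fun hadj ↦ hadj.2.elim h.not_b_le_d h.not_d_le_b⟩

theorem IsInducedFourCycle.isPowerCrown_or (h : IsInducedFourCycle a b c d) :
    IsPowerCrown a b c d ∨ IsPowerCrown b c d a := by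
  simp only [IsInducedFourCycle, powerGraph_adj_iff, not_and_or, not_or] at h
  obtain ⟨-, hac, -, -, hbd, -, ⟨-, hab⟩, ⟨-, hbc⟩, ⟨-, hcd⟩, ⟨-, hda⟩, hac', hbd'⟩ := h
  obtain ⟨nac, nca⟩ := hac'.resolve_left (not_not.2 hac)
  obtain ⟨nbd, ndb⟩ := hbd'.resolve_left (not_not.2 hbd)
  rcases hab with hab | hba
  · have hcb := hbc.resolve_left fun hbc ↦ nac (hab.trans hbc)
    have hcd := hcd.resolve_right fun hdc ↦ ndb (hdc.trans hcb)
    have had := hda.resolve_left fun hda ↦ ndb (hda.trans hab)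
    exact .inr ⟨hcb, hcd, hab, had, nbd, ndb, nca, nac⟩
  · have hbc := hbc.resolve_right fun hcb ↦ nca (hcb.trans hba)
    have hdc := hcd.resolve_left fun hcd ↦ nbd (hbc.trans hcd)
    have hda := hda.resolve_right fun had ↦ nbd (hba.trans had)
    exact .inl ⟨hba, hbc, hda, hdc, nac, nca, nbd, ndb⟩

theorem exists_isInducedFourCycle_iff_exists_isPowerCrown :
    (∃ a b c d : G, IsInducedFourCycle a b c d) ↔ ∃ a b c d : G, IsPowerCrown a b c d := by
  constructor
  · rintro ⟨a, b, c, d, h⟩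
    exact h.isPowerCrown_or.elim (⟨a, b, c, d, ·⟩) (⟨b, c, d, a, ·⟩)
  · rintro ⟨a, b, c, d, h⟩
    exact ⟨a, b, c, d, h.isInducedFourCycle⟩

end Crowns

section Forks

variable {G : Type*} [Group G] {g h u w z : G} {p q i j : ℕ}

theorem HasCentralizedFork.exists_isPowerCrown (hfork : HasCentralizedFork G) :
    ∃ a b c d : G, IsPowerCrown a b c d := by
  obtain ⟨g, h, q, m, hq, hm, hg, hh, hgh, hne, z, hz, hzp, hzq⟩ := hfork
  obtain ⟨hzg, hzh⟩ := mem_centralizer_pair_iff.1 hz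
  have hcop : (q ^ m).Coprime (orderOf z) := ((Nat.coprime_primes hq hzp).2 hzq.symm).pow_left m
  have hgz := zpowers_mul_eq_sup hzg.symm (hg ▸ hcop)
  have hhz := zpowers_mul_eq_sup hzh.symm (hh ▸ hcop)
  have hfin {k : G} (hzk : Commute z k) (hk : orderOf k = q ^ m) : IsOfFinOrder (k * z) :=
    hzk.symm.isOfFinOrder_mul (orderOf_pos_iff.1 (hk ▸ pow_pos hq.pos m))
      (orderOf_pos_iff.1 hzp.pos)
  have hpow_le : zpowers (g ^ q) ≤ zpowers g := zpowers_le.2 (npow_mem_zpowers g q)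
  have hpow_le' : zpowers (g ^ q) ≤ zpowers h := zpowers_le.2 (hgh ▸ npow_mem_zpowers h q)
  have hpow_cop : (orderOf (g ^ q)).Coprime (orderOf z) :=
    hcop.coprime_dvd_left (hg ▸ orderOf_pow_dvd q)
  have hpow_ne : g ^ q ≠ 1 := by
    rw [Ne, ← orderOf_dvd_iff_pow_eq_one, hg]
    exact fun hdvd ↦ hm.not_ge ((Nat.pow_dvd_pow_iff_le_right hq.one_lt).1 (by rwa [pow_one]))
  have hz_ne : z ≠ 1 := fun h1 ↦ hzp.ne_one (orderOf_eq_one_iff.2 h1)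
  refine ⟨g * z, g ^ q, h * z, z, hgz ▸ hpow_le.trans le_sup_left, hhz ▸ hpow_le'.trans le_sup_left,
    hgz ▸ le_sup_right, hhz ▸ le_sup_right, fun hle ↦ hne ?_, fun hle ↦ hne ?_,
    not_zpowers_le_of_coprime hpow_cop hpow_ne, not_zpowers_le_of_coprime hpow_cop.symm hz_ne⟩
  · exact zpowers_eq_of_orderOf_eq (hfin hzh hh) ((hgz ▸ le_sup_left).trans hle)
      (hhz ▸ le_sup_left) (hg.trans hh.symm)
  · exact zpowers_eq_of_orderOf_eq (hfin hzg hg) (hgz ▸ le_sup_left)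
      ((hhz ▸ le_sup_left).trans hle) (hg.trans hh.symm)

theorem exists_pow_eq_pow_of_not_zpowers_le (hq : q.Prime) (hg : orderOf g = q ^ i)
    (hh : orderOf h = q ^ j) (hgh : ¬ zpowers g ≤ zpowers h) (hhg : ¬ zpowers h ≤ zpowers g) :
    ∃ g' h' : G, zpowers g' ≤ zpowers g ∧ zpowers h' ≤ zpowers h ∧ g' ^ q = h' ^ q ∧
      ¬ zpowers g' ≤ zpowers h := by
  rw [zpowers_le] at hgh
  obtain ⟨n, hn, hn'⟩ : ∃ n, g ^ q ^ n ∉ zpowers h ∧ g ^ q ^ (n + 1) ∈ zpowers h :=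
    Nat.exists_not_and_succ_of_not_zero_of_exists (by simpa using hgh)
      ⟨i, by rw [← hg, pow_orderOf_eq_one]; exact one_mem _⟩
  have hfin : IsOfFinOrder h := orderOf_pos_iff.1 (hh ▸ pow_pos hq.pos j)
  obtain ⟨k, hk : h ^ k = g ^ q ^ (n + 1)⟩ := hfin.mem_powers_iff_mem_zpowers.2 hn'
  have hqk : q ∣ k := by
    by_contra hqk
    have hcop : k.Coprime (orderOf h) := hh ▸ ((hq.coprime_iff_not_dvd.2 hqk).symm.pow_right j)
    refine hhg ?_
    rw [← zpowers_pow_of_coprime hcop, hk, zpowers_le]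
    exact npow_mem_zpowers _ _
  obtain ⟨l, rfl⟩ := hqk
  refine ⟨g ^ q ^ n, h ^ l, zpowers_le.2 (npow_mem_zpowers _ _),
    zpowers_le.2 (npow_mem_zpowers _ _), ?_, by rwa [zpowers_le]⟩
  rw [← pow_mul, ← pow_mul, ← pow_succ, mul_comm l, hk]

theorem hasCentralizedFork_of_pow_eq_pow (hq : q.Prime) (hg : orderOf g = q ^ i)
    (hh : orderOf h = q ^ j) (hgh : g ^ q = h ^ q) (hne_one : g ^ q ≠ 1)
    (hne : zpowers g ≠ zpowers h) (hz : (orderOf z).Prime) (hzq : orderOf z ≠ q)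
    (hzg : Commute z g) (hzh : Commute z h) : HasCentralizedFork G := by
  have hi := one_lt_of_pow_ne_one hg hne_one
  have hj := one_lt_of_pow_ne_one hh (hgh ▸ hne_one)
  have horder : orderOf h = orderOf g := by
    rw [orderOf_eq_mul_orderOf_pow hq.ne_zero (hh ▸ dvd_pow_self q hj.ne_bot), ← hgh,
      ← orderOf_eq_mul_orderOf_pow hq.ne_zero (hg ▸ dvd_pow_self q hi.ne_bot)]
  exact ⟨g, h, q, i, hq, hi, hg, horder.trans hg, hgh, hne, z,
    mem_centralizer_pair_iff.2 ⟨hzg, hzh⟩, hz, hzq⟩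

theorem hasCentralizedFork_of_not_zpowers_le (hq : q.Prime) (hg : orderOf g = q ^ i)
    (hh : orderOf h = q ^ j) (hw : orderOf w = q) (hwg : zpowers w ≤ zpowers g)
    (hwh : zpowers w ≤ zpowers h) (hz : (orderOf z).Prime) (hzq : orderOf z ≠ q)
    (hzg : Commute z g) (hzh : Commute z h) (hgh : ¬ zpowers g ≤ zpowers h)
    (hhg : ¬ zpowers h ≤ zpowers g) : HasCentralizedFork G := by
  obtain ⟨g', h', hg', hh', hpow, hnle⟩ :=
    exists_pow_eq_pow_of_not_zpowers_le hq hg hh hgh hhg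
  have hfin : IsOfFinOrder g := orderOf_pos_iff.1 (hg ▸ pow_pos hq.pos i)
  have hne_one : g' ^ q ≠ 1 := fun h1 ↦ hnle <|
    (zpowers_le_of_orderOf_dvd hfin hg' hwg (hw ▸ orderOf_dvd_of_pow_eq_one h1)).trans hwh
  obtain ⟨s, -, hs⟩ := (Nat.dvd_prime_pow hq).1 (hg ▸ orderOf_dvd_of_zpowers_le hg')
  obtain ⟨t, -, ht⟩ := (Nat.dvd_prime_pow hq).1 (hh ▸ orderOf_dvd_of_zpowers_le hh')
  have hcomm {k k' : G} (hk : zpowers k' ≤ zpowers k) (hzk : Commute z k) : Commute z k' := by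
    obtain ⟨n, rfl⟩ := mem_zpowers_iff.1 (zpowers_le.1 hk)
    exact hzk.zpow_right n
  exact hasCentralizedFork_of_pow_eq_pow hq hs ht hpow hne_one (fun heq ↦ hnle (heq.trans_le hh'))
    hz hzq (hcomm hg' hzg) (hcomm hh' hzh)

theorem hasCentralizedFork_of_conj_notMem (hq : q.Prime) (hg : orderOf g = q ^ i)
    (hw : orderOf w = q) (hwg : zpowers w ≤ zpowers g) (hwu : Commute w u)
    (hz : (orderOf z).Prime) (hzq : orderOf z ≠ q) (hzu : Commute z u) (hzg : Commute z g)
    (hconj : u * g * u⁻¹ ∉ zpowers g) : HasCentralizedFork G := by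
  have horder : orderOf (u * g * u⁻¹) = orderOf g :=
    (SemiconjBy.conj_mk u g).orderOf_eq.symm
  have hfin : IsOfFinOrder (u * g * u⁻¹) := orderOf_pos_iff.1 (horder ▸ hg ▸ pow_pos hq.pos i)
  have hw_conj : w ∈ zpowers (u * g * u⁻¹) := by
    obtain ⟨k, rfl⟩ := mem_zpowers_iff.1 (zpowers_le.1 hwg)
    refine ⟨k, ?_⟩
    simp only [conj_zpow, ← hwu.eq, mul_inv_cancel_right]
  refine hasCentralizedFork_of_not_zpowers_le hq hg (horder.trans hg) hw hwg
    (zpowers_le.2 hw_conj) hz hzq hzg ((hzu.mul_right hzg).mul_right hzu.inv_right)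
    (fun hle ↦ hconj ?_) (by rwa [zpowers_le])
  exact zpowers_le.1 (zpowers_le_of_orderOf_dvd hfin le_rfl hle horder.dvd)

theorem commute_or_hasCentralizedFork (hp : p.Prime) (hq : q.Prime) (hpq : p ≠ q)
    (hu : orderOf u = p ^ i) (hg : orderOf g = q ^ j) (hz : orderOf z = p) (hw : orderOf w = q)
    (hzu : zpowers z ≤ zpowers u) (hwg : zpowers w ≤ zpowers g) (hzg : Commute z g)
    (hwu : Commute w u) : Commute u g ∨ HasCentralizedFork G := by
  refine or_iff_not_imp_right.2 fun hfork ↦ ?_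
  have hcop : (orderOf u).Coprime (orderOf g) := by
    rw [hu, hg]
    exact ((Nat.coprime_primes hp hq).2 hpq).pow i j
  refine commute_of_conj_mem_of_disjoint (disjoint_zpowers_of_coprime hcop) (mem_zpowers u)
    (mem_zpowers g) ?_ ?_ <;> by_contra hconj <;> refine hfork ?_
  · exact hasCentralizedFork_of_conj_notMem hq hg hw hwg hwu (hz ▸ hp) (hz ▸ hpq)
      (commute_of_zpowers_le hzu le_rfl) hzg hconj
  · exact hasCentralizedFork_of_conj_notMem hp hu hz hzu hzg (hw ▸ hq) (hw ▸ hpq.symm)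
      (commute_of_zpowers_le hwg le_rfl) hwu hconj

end Forks

section PrimarySplittings

variable {G : Type*} [Group G] {a b c d w x x' y y' z : G}

theorem exists_isPrimarySplitting (ha : IsOfFinOrder a) (hz : (orderOf z).Prime)
    (hw : (orderOf w).Prime) (hzw : orderOf z ≠ orderOf w)
    (hthird : ∀ r : ℕ, r.Prime → orderOf z ≠ r → orderOf w ≠ r →
      ¬ orderOf z * orderOf w * r ∣ orderOf a)
    (hza : zpowers z ≤ zpowers a) (hwa : zpowers w ≤ zpowers a) :
    ∃ x y : G, IsPrimarySplitting z w a x y := by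
  have ha0 := ha.orderOf_pos.ne'
  have hz_dvd := orderOf_dvd_of_zpowers_le hza
  have hw_dvd := orderOf_dvd_of_zpowers_le hwa
  obtain ⟨x, y, hx, hy, hxy⟩ := exists_orderOf_eq_zpowers_eq_sup ha
    (((Nat.coprime_primes hz hw).2 hzw).pow _ _) <|
    eq_pow_mul_pow_of_primeFactors_eq_pair ha0 hzw
      (primeFactors_eq_pair ha0 hz hw hzw hz_dvd hw_dvd hthird)
  refine ⟨x, y, hxy, ⟨_, hx⟩, ⟨_, hy⟩, zpowers_le_of_orderOf_dvd ha hza (hxy ▸ le_sup_left) ?_,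
    zpowers_le_of_orderOf_dvd ha hwa (hxy ▸ le_sup_right) ?_⟩
  · exact hx ▸ dvd_pow_self _ (hz.factorization_pos_of_dvd ha0 hz_dvd).ne'
  · exact hy ▸ dvd_pow_self _ (hw.factorization_pos_of_dvd ha0 hw_dvd).ne'

namespace IsPrimarySplitting

theorem symm (h : IsPrimarySplitting z w a x y) : IsPrimarySplitting w z a y x :=
  ⟨h.zpowers_eq.trans (sup_comm _ _), h.orderOf_right, h.orderOf_left, h.le_right, h.le_left⟩

theorem commute_right (h : IsPrimarySplitting z w a x y) : Commute z y :=
  commute_of_zpowers_le (h.le_left.trans (h.zpowers_eq ▸ le_sup_left)) (h.zpowers_eq ▸ le_sup_right)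

theorem zpowers_left_le_total (ha : IsPrimarySplitting z w a x y)
    (hc : IsPrimarySplitting z w c x' y') (hz : (orderOf z).Prime) (hw : (orderOf w).Prime)
    (hzw : orderOf z ≠ orderOf w) (hfork : ¬ HasCentralizedFork G) :
    zpowers x ≤ zpowers x' ∨ zpowers x' ≤ zpowers x := by
  obtain ⟨_, hx⟩ := ha.orderOf_left
  obtain ⟨_, hx'⟩ := hc.orderOf_left
  by_contra! hnle
  exact hfork (hasCentralizedFork_of_not_zpowers_le hz hx hx' rfl ha.le_left hc.le_left hw hzw.symm
    ha.symm.commute_right hc.symm.commute_right hnle.1 hnle.2)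

theorem zpowers_left_le_or_zpowers_right_le (ha : IsPrimarySplitting z w a x y)
    (hc : IsPrimarySplitting z w c x' y') (hz : (orderOf z).Prime) (hw : (orderOf w).Prime)
    (hzw : orderOf z ≠ orderOf w) (hfork : ¬ HasCentralizedFork G)
    (hsq : ∀ g : G, ¬ orderOf z ^ 2 * orderOf w ^ 2 ∣ orderOf g) :
    zpowers x' ≤ zpowers z ∨ zpowers y ≤ zpowers w := by
  obtain ⟨i, hx'⟩ := hc.orderOf_left
  obtain ⟨j, hy⟩ := ha.orderOf_right
  by_contra! hnle
  have hcomm : Commute x' y := (commute_or_hasCentralizedFork hz hw hzw hx' hy rfl rfl hc.le_left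
    ha.le_right ha.commute_right hc.symm.commute_right).resolve_right hfork
  have hcop : (orderOf x').Coprime (orderOf y) := by
    rw [hx', hy]
    exact ((Nat.coprime_primes hz hw).2 hzw).pow i j
  refine hsq (x' * y) ?_
  rw [hcomm.orderOf_mul_eq_mul_orderOf_of_coprime hcop]
  exact mul_dvd_mul (sq_dvd_orderOf_of_not_zpowers_le hz hx' rfl hc.le_left hnle.1)
    (sq_dvd_orderOf_of_not_zpowers_le hw hy rfl ha.le_right hnle.2)

theorem zpowers_le_of_le (ha : IsPrimarySplitting z w a x y) (hc : IsPrimarySplitting z w c x' y')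
    (hx : zpowers x ≤ zpowers x') (hy : zpowers y ≤ zpowers y') : zpowers a ≤ zpowers c := by
  rw [ha.zpowers_eq, hc.zpowers_eq]
  exact sup_le_sup hx hy

theorem zpowers_le_total_of_crossed (ha : IsPrimarySplitting z w a x y)
    (hc : IsPrimarySplitting z w c x' y') (hz : (orderOf z).Prime) (hw : (orderOf w).Prime)
    (hzw : orderOf z ≠ orderOf w) (hfork : ¬ HasCentralizedFork G)
    (hsq : ∀ g : G, ¬ orderOf z ^ 2 * orderOf w ^ 2 ∣ orderOf g)
    (hx : zpowers x ≤ zpowers x') (hy : zpowers y' ≤ zpowers y) :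
    zpowers a ≤ zpowers c ∨ zpowers c ≤ zpowers a := by
  rcases ha.zpowers_left_le_or_zpowers_right_le hc hz hw hzw hfork hsq with hx'z | hyw
  · exact .inr (hc.zpowers_le_of_le ha (hx'z.trans ha.le_left) hy)
  · exact .inl (ha.zpowers_le_of_le hc hx (hyw.trans hc.le_right))

theorem zpowers_le_total (ha : IsPrimarySplitting z w a x y)
    (hc : IsPrimarySplitting z w c x' y') (hz : (orderOf z).Prime) (hw : (orderOf w).Prime)
    (hzw : orderOf z ≠ orderOf w) (hfork : ¬ HasCentralizedFork G)
    (hsq : ∀ g : G, ¬ orderOf z ^ 2 * orderOf w ^ 2 ∣ orderOf g) :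
    zpowers a ≤ zpowers c ∨ zpowers c ≤ zpowers a := by
  rcases ha.zpowers_left_le_total hc hz hw hzw hfork with hx | hx <;>
    rcases ha.symm.zpowers_left_le_total hc.symm hw hz hzw.symm hfork with hy | hy
  · exact .inl (ha.zpowers_le_of_le hc hx hy)
  · exact ha.zpowers_le_total_of_crossed hc hz hw hzw hfork hsq hx hy
  · exact (hc.zpowers_le_total_of_crossed ha hz hw hzw hfork hsq hx hy).symm
  · exact .inr (hc.zpowers_le_of_le ha hx hy)

end IsPrimarySplitting

theorem IsPowerCrown.exists_prime_orderOf (hcrown : IsPowerCrown a b c d) (ha : IsOfFinOrder a) :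
    ∃ z w : G, (orderOf z).Prime ∧ (orderOf w).Prime ∧ orderOf z ≠ orderOf w ∧
      zpowers z ≤ zpowers a ∧ zpowers z ≤ zpowers c ∧
      zpowers w ≤ zpowers a ∧ zpowers w ≤ zpowers c := by
  obtain ⟨p, q, hp, hq, hpq, hpb, hqd⟩ := exists_prime_ne_dvd_of_not_dvd
    (fun hdvd ↦ hcrown.not_b_le_d
      (zpowers_le_of_orderOf_dvd ha hcrown.b_le_a hcrown.d_le_a hdvd))
    (fun hdvd ↦ hcrown.not_d_le_b
      (zpowers_le_of_orderOf_dvd ha hcrown.d_le_a hcrown.b_le_a hdvd))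
  have hb : IsOfFinOrder b := ha.of_mem_zpowers (zpowers_le.1 hcrown.b_le_a)
  have hd : IsOfFinOrder d := ha.of_mem_zpowers (zpowers_le.1 hcrown.d_le_a)
  obtain ⟨z, hzb, rfl⟩ := exists_zpowers_le_orderOf_eq hb hpb
  obtain ⟨w, hwd, rfl⟩ := exists_zpowers_le_orderOf_eq hd hqd
  exact ⟨z, w, hp, hq, hpq, hzb.trans hcrown.b_le_a, hzb.trans hcrown.b_le_c,
    hwd.trans hcrown.d_le_a, hwd.trans hcrown.d_le_c⟩

theorem IsPowerCrown.hasCentralizedFork (hcrown : IsPowerCrown a b c d) (ha : IsOfFinOrder a)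
    (hc : IsOfFinOrder c)
    (h1 : ∀ (g : G) (p q r : ℕ), p.Prime → q.Prime → r.Prime → p ≠ q → p ≠ r → q ≠ r →
      ¬ p * q * r ∣ orderOf g)
    (h2 : ∀ (g : G) (p q : ℕ), p.Prime → q.Prime → p ≠ q → ¬ p ^ 2 * q ^ 2 ∣ orderOf g) :
    HasCentralizedFork G := by
  obtain ⟨z, w, hz, hw, hzw, hza, hzc, hwa, hwc⟩ := hcrown.exists_prime_orderOf ha
  obtain ⟨x, y, hxy⟩ := exists_isPrimarySplitting ha hz hw hzw
    (fun r hr ↦ h1 a _ _ r hz hw hr hzw) hza hwa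
  obtain ⟨x', y', hxy'⟩ := exists_isPrimarySplitting hc hz hw hzw
    (fun r hr ↦ h1 c _ _ r hz hw hr hzw) hzc hwc
  by_contra hfork
  exact (hxy.zpowers_le_total hxy' hz hw hzw hfork fun g ↦ h2 g _ _ hz hw hzw).elim
    hcrown.not_a_le_c hcrown.not_c_le_a

end PrimarySplittings

theorem stmt15_general (G : Type*) [Group G] (hG : IsMulTorsion G)
    (h1 : ∀ (g : G) (p q r : ℕ), p.Prime → q.Prime → r.Prime → p ≠ q → p ≠ r → q ≠ r →
      ¬ p * q * r ∣ orderOf g)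
    (h2 : ∀ (g : G) (p q : ℕ), p.Prime → q.Prime → p ≠ q → ¬ p ^ 2 * q ^ 2 ∣ orderOf g) :
    (∃ a b c d : G, IsInducedFourCycle a b c d) ↔ HasCentralizedFork G := by
  rw [exists_isInducedFourCycle_iff_exists_isPowerCrown]
  exact ⟨fun ⟨_, _, _, _, hcrown⟩ ↦ hcrown.hasCentralizedFork (hG _) (hG _) h1 h2,
    HasCentralizedFork.exists_isPowerCrown⟩

theorem stmt15 (G : Type*) [Group G] [Fintype G]
    (h1 : ∀ (g : G) (p q r : ℕ), p.Prime → q.Prime → r.Prime → p ≠ q → p ≠ r → q ≠ r →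
      ¬ p * q * r ∣ orderOf g)
    (h2 : ∀ (g : G) (p q : ℕ), p.Prime → q.Prime → p ≠ q → ¬ p ^ 2 * q ^ 2 ∣ orderOf g) :
    (∃ a b c d : G, IsInducedFourCycle a b c d) ↔
      ∃ (g h : G) (q m : ℕ), q.Prime ∧ 1 < m ∧
        orderOf g = q ^ m ∧ orderOf h = q ^ m ∧
        g ^ q = h ^ q ∧ Subgroup.zpowers g ≠ Subgroup.zpowers h ∧
        ∃ p : ℕ, p.Prime ∧ p ≠ q ∧ p ∣ Nat.card (Subgroup.centralizer {g, h} : Subgroup G) := by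
  simpa only [HasCentralizedFork, exists_prime_ne_dvd_natCard_iff] using
    stmt15_general G isMulTorsion_of_finite h1 h2
end

section
/- Let G be a finite group and let a, b, c, d ∈ G be pairwise distinct elements forming an induced 4-cycle in the power graph of G (a–b, b–c, c–d, d–a are edges while a–c and b–d are not). Then the subgroup U = ⟨a, b, c, d⟩ generated by the four vertices has a normal cyclic subgroup that is nontrivial and proper in U. -/
/-!
The relation `x ∈ ⟨y⟩` is transitive. So if `a` is a power of `b`, then `c` is also a power of `b`,
as `b` being a power of `c` would make `a` adjacent to `c`. Hence `a` commutes with `c`, both lying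
in `⟨b⟩`, and with its neighbours `b` and `d`, so `⟨a⟩` is central in `⟨a, b, c, d⟩`. It is
nontrivial because `a ∉ ⟨c⟩` and proper because `c ∉ ⟨a⟩`. If instead `b` is a power of `a`,
reflect the cycle.
-/

open Subgroup

section

variable {G : Type*} [Group G] {x y z : G}

theorem commute_of_mem_zpowers (hx : x ∈ zpowers z) (hy : y ∈ zpowers z) : Commute x y :=
  setLike_mul_comm hx hy

theorem powerGraph_adj :
    (powerGraph G).Adj x y ↔ x ≠ y ∧ (x ∈ zpowers y ∨ y ∈ zpowers x) :=
  SimpleGraph.fromRel_adj _ _ _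

theorem commute_of_powerGraph_adj (h : (powerGraph G).Adj x y) : Commute x y :=
  (powerGraph_adj.1 h).2.elim (fun hx => commute_of_mem_zpowers hx (mem_zpowers y))
    (fun hy => commute_of_mem_zpowers (mem_zpowers x) hy)

theorem notMem_zpowers_of_not_powerGraph_adj (hne : x ≠ y) (h : ¬(powerGraph G).Adj x y) :
    x ∉ zpowers y :=
  fun hx => h (powerGraph_adj.2 ⟨hne, Or.inl hx⟩)

theorem commute_of_mem_zpowers_of_powerGraph_adj (hxy : x ∈ zpowers y)
    (hyz : (powerGraph G).Adj y z) (hxz : x ∉ zpowers z) : Commute x z := by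
  have hy : y ∉ zpowers z := fun hy => hxz (zpowers_le.2 hy hxy)
  have hz : z ∈ zpowers y := (powerGraph_adj.1 hyz).2.resolve_left hy
  exact commute_of_mem_zpowers hxy hz

theorem closure_le_centralizer_zpowers {S : Set G} (hS : ∀ s ∈ S, Commute x s) :
    closure S ≤ centralizer (zpowers x : Set G) := by
  rw [zpowers_eq_closure, centralizer_closure, closure_le]
  exact fun s hs => mem_centralizer_singleton_iff.2 (hS s hs).symm

theorem conj_mem_of_le_centralizer {H N : Subgroup G} (hHN : H ≤ centralizer (N : Set G))
    (hx : x ∈ H) (hy : y ∈ N) : x * y * x⁻¹ ∈ N := by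
  rwa [← mem_centralizer_iff.1 (hHN hx) y hy, mul_inv_cancel_right]

end

namespace IsInducedFourCycle

variable {G : Type*} [Group G] {a b c d : G}

theorem adj (h : IsInducedFourCycle a b c d) : (powerGraph G).Adj a b := by
  obtain ⟨-, -, -, -, -, -, eab, -⟩ := h
  exact eab

theorem reflect (h : IsInducedFourCycle a b c d) : IsInducedFourCycle b a d c := by
  obtain ⟨hab, hac, had, hbc, hbd, hcd, eab, ebc, ecd, eda, nac, nbd⟩ := h
  exact ⟨hab.symm, hbd, hbc, had, hac, hcd.symm, eab.symm, eda.symm, ecd.symm, ebc.symm, nbd, nac⟩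

theorem notMem_zpowers_opposite (h : IsInducedFourCycle a b c d) : a ∉ zpowers c := by
  obtain ⟨-, hac, -, -, -, -, -, -, -, -, nac, -⟩ := h
  exact notMem_zpowers_of_not_powerGraph_adj hac nac

theorem opposite_notMem_zpowers (h : IsInducedFourCycle a b c d) : c ∉ zpowers a := by
  obtain ⟨-, hac, -, -, -, -, -, -, -, -, nac, -⟩ := h
  exact notMem_zpowers_of_not_powerGraph_adj hac.symm (mt SimpleGraph.Adj.symm nac)

theorem forall_commute_of_mem_zpowers (h : IsInducedFourCycle a b c d) (hab : a ∈ zpowers b) :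
    ∀ s ∈ ({a, b, c, d} : Set G), Commute a s := by
  have hac : a ∉ zpowers c := h.notMem_zpowers_opposite
  obtain ⟨-, -, -, -, -, -, eab, ebc, -, eda, -, -⟩ := h
  rintro s (rfl | rfl | rfl | rfl)
  · exact Commute.refl s
  · exact commute_of_powerGraph_adj eab
  · exact commute_of_mem_zpowers_of_powerGraph_adj hab ebc hac
  · exact commute_of_powerGraph_adj eda.symm

theorem exists_isCyclic_central_of_mem_zpowers (h : IsInducedFourCycle a b c d)
    (hab : a ∈ zpowers b) :
    ∃ N : Subgroup G, N ≤ closure {a, b, c, d} ∧ IsCyclic N ∧ N ≠ ⊥ ∧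
      N ≠ closure {a, b, c, d} ∧ closure {a, b, c, d} ≤ centralizer (N : Set G) := by
  refine ⟨zpowers a, zpowers_le.2 (subset_closure (by simp)), inferInstance, ?nontrivial, ?proper,
    closure_le_centralizer_zpowers (h.forall_commute_of_mem_zpowers hab)⟩
  case nontrivial =>
    intro hbot
    exact h.notMem_zpowers_opposite (zpowers_eq_bot.1 hbot ▸ one_mem _)
  case proper =>
    intro htop
    exact h.opposite_notMem_zpowers (htop ▸ subset_closure (by simp))

end IsInducedFourCycle

theorem stmt17_general {G : Type*} [Group G] {a b c d : G} (hcyc : IsInducedFourCycle a b c d) :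
    ∃ N : Subgroup G, N ≤ closure {a, b, c, d} ∧ IsCyclic N ∧ N ≠ ⊥ ∧
      N ≠ closure {a, b, c, d} ∧ closure {a, b, c, d} ≤ centralizer (N : Set G) := by
  rcases (powerGraph_adj.1 hcyc.adj).2 with hab | hba
  · exact hcyc.exists_isCyclic_central_of_mem_zpowers hab
  · rw [Set.insert_comm a b, Set.pair_comm c d]
    exact hcyc.reflect.exists_isCyclic_central_of_mem_zpowers hba

theorem stmt17 (G : Type*) [Group G] [Fintype G] (a b c d : G)
    (hcyc : IsInducedFourCycle a b c d) :
    ∃ N : Subgroup G, N ≤ Subgroup.closure {a, b, c, d} ∧ IsCyclic N ∧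
      N ≠ ⊥ ∧ N ≠ Subgroup.closure {a, b, c, d} ∧
      ∀ u ∈ Subgroup.closure ({a, b, c, d} : Set G), ∀ x ∈ N, u * x * u⁻¹ ∈ N := by
  obtain ⟨N, hle, hcyclic, hbot, hproper, hcentral⟩ := stmt17_general hcyc
  exact ⟨N, hle, hcyclic, hbot, hproper, fun _ hu _ hx => conj_mem_of_le_centralizer hcentral hu hx⟩
end
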